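/- Suppose (x_n) ⊆ W is a normalised block sequence, β < ω₁, and for every normalised block sequence (y_n) in X = [x_n] and every K ≥ 1, player I has a strategy in F^β_X to play outcomes (z_0,…,z_k) satisfying (z_0,…,z_k) ≁_K (y_0,…,y_k). Then for every normalised block sequence (y_n) in X there is a sequence I_0 < I_1 < I_2 < … of finite intervals of ℕ such that whenever A ⊆ ℕ is infinite and Z = [x_j : j ∉ ⋃_{m∈A} I_m], then Emb((y_n),Z) ≤ β. -/

import Mathlib

open Filter Topology

namespace Rosendal

variable {𝒲 : Type} [NormedAddCommGroup 𝒲] [NormedSpace ℝ 𝒲]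

/-- `(e n)` is a Schauder basis of the Banach space `𝒲`. -/
def IsSchauderBasis (e : ℕ → 𝒲) : Prop :=
  ∀ x : 𝒲, ∃! a : ℕ → ℝ,
    Tendsto (fun N => ∑ i ∈ Finset.range N, a i • e i) atTop (𝓝 x)

/-- `x` is a linear combination of the vectors `b i`, `i ∈ s`. -/
def SuppIn (b : ℕ → 𝒲) (x : 𝒲) (s : Finset ℕ) : Prop :=
  ∃ a : ℕ → ℝ, x = ∑ i ∈ s, a i • b i

/-- `(x i)_{i<k} ∼_K (y i)_{i<k}`. -/
def SeqEquiv (K : ℝ) (k : ℕ) (x y : ℕ → 𝒲) : Prop :=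
  ∀ a : ℕ → ℝ,
    (1 / K) * ‖∑ i ∈ Finset.range k, a i • x i‖ ≤ ‖∑ i ∈ Finset.range k, a i • y i‖ ∧
    ‖∑ i ∈ Finset.range k, a i • y i‖ ≤ K * ‖∑ i ∈ Finset.range k, a i • x i‖

/-- The outcome `l = (x 0, …, x k)` satisfies `(x 0, …, x k) ∼_K (y 0, …, y k)`. -/
def OutcomeEquiv (K : ℝ) (l : List 𝒲) (y : ℕ → 𝒲) : Prop :=
  SeqEquiv K l.length (fun i => l.getD i 0) y

/-- The outcome `l = (u 0, v 0, u 1, v 1, …, u k, v k)` satisfies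
`(u 0, …, u k) ∼_K (v 0, …, v k)`. -/
def PairOutcomeEquiv (K : ℝ) (l : List 𝒲) : Prop :=
  SeqEquiv K (l.length / 2) (fun i => l.getD (2 * i) 0) (fun i => l.getD (2 * i + 1) 0)

/-- The tree `T((x n), Y, K)`. -/
def embTree (x : ℕ → 𝒲) (Y : Set 𝒲) (K : ℝ) : Set (List 𝒲) :=
  {l | (∀ v ∈ l, v ∈ Y) ∧ SeqEquiv K l.length (fun i => l.getD i 0) x}

open Classical in
/-- The rank of a tree of finite sequences; `⊤ = ∞` if it is ill-founded. -/
noncomputable def treeRank (T : Set (List 𝒲)) : WithTop Ordinal :=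
  if h : WellFounded (fun t s : T => s.val <+: t.val ∧ s.val ≠ t.val) then
    ((⨆ s : T, Order.succ ((h.apply s).rank) : Ordinal) : WithTop Ordinal)
  else ⊤

open Classical in
/-- The embeddability index `Emb((x n), Y) = sup_{K ≥ 1} rank T((x n), Y, K)`. -/
noncomputable def embIndex (x : ℕ → 𝒲) (Y : Set 𝒲) : WithTop Ordinal :=
  if ∃ K : ℝ, 1 ≤ K ∧ treeRank (embTree x Y K) = ⊤ then ⊤
  else ((sSup {o : Ordinal | ∃ K : ℝ, 1 ≤ K ∧
      (o : WithTop Ordinal) = treeRank (embTree x Y K)} : Ordinal) : WithTop Ordinal)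

/-- `(I m)` is a sequence of successive nonempty finite intervals `I 0 < I 1 < …` of `ℕ`. -/
def IntervalSeq (I : ℕ → Finset ℕ) : Prop :=
  (∀ m, ∃ a b : ℕ, a ≤ b ∧ I m = Finset.Icc a b) ∧
  ∀ m, ∀ i ∈ I m, ∀ j ∈ I (m + 1), i < j

/-- The setting of Section 2 of the paper: a Banach space `𝒲` with a Schauder basis
`(e n)`, a countable subfield `𝔽 ⊆ ℝ` closed under the norms of finite `𝔽`-linear
combinations of the basis, and the countable `𝔽`-vector space `W` spanned by `(e n)`. -/
structure Frame (𝒲 : Type) [NormedAddCommGroup 𝒲] [NormedSpace ℝ 𝒲] : Type where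
  e : ℕ → 𝒲
  complete : CompleteSpace 𝒲
  basis : IsSchauderBasis e
  𝔽 : Subfield ℝ
  countable : (𝔽 : Set ℝ).Countable
  norm_mem : ∀ (s : Finset ℕ) (a : ℕ → ℝ), (∀ i ∈ s, a i ∈ 𝔽) →
    ‖∑ i ∈ s, a i • e i‖ ∈ 𝔽

namespace Frame

variable {𝒲 : Type} [NormedAddCommGroup 𝒲] [NormedSpace ℝ 𝒲] (ctx : Frame 𝒲)

/-- The `𝔽`-linear span of a set of vectors. -/
def fspan (S : Set 𝒲) : Set 𝒲 :=
  {v | ∃ t : Finset 𝒲, ↑t ⊆ S ∧ ∃ c : 𝒲 → ℝ, (∀ w, c w ∈ ctx.𝔽) ∧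
    v = ∑ w ∈ t, c w • w}

/-- The countable `𝔽`-vector space `W` with basis `(e n)`. -/
def W : Set 𝒲 := ctx.fspan (Set.range ctx.e)

/-- `(y n)` is a block sequence with respect to the reference block basis `(b n)`:
a sequence of nonzero vectors of the `𝔽`-span of `(b n)` with successive supports. -/
def BlockSeqRel (b y : ℕ → 𝒲) : Prop :=
  (∀ n, y n ∈ ctx.fspan (Set.range b)) ∧ (∀ n, y n ≠ 0) ∧
  ∃ D : ℕ → Finset ℕ, (∀ n, SuppIn b (y n) (D n)) ∧
    ∀ n, ∀ i ∈ D n, ∀ j ∈ D (n + 1), i < j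

/-- `(y n)` is a block sequence (with respect to the basis `(e n)` of `W`). -/
def IsBlockSeq (y : ℕ → 𝒲) : Prop := ctx.BlockSeqRel ctx.e y

/-- `Y` is a block subspace of `X`: the `𝔽`-span of an infinite block sequence of
vectors of `X`. -/
def IsBlockSubspaceOf (Y X : Set 𝒲) : Prop :=
  ∃ y : ℕ → 𝒲, ctx.IsBlockSeq y ∧ (∀ n, y n ∈ X) ∧ Y = ctx.fspan (Set.range y)

/-- `Y` is a block subspace of `W`. -/
def IsBlockSubspace (Y : Set 𝒲) : Prop := ctx.IsBlockSubspaceOf Y ctx.W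

/-- `F` is a finite-dimensional `𝔽`-subspace of `X`. -/
def IsFinDimIn (F X : Set 𝒲) : Prop :=
  ∃ t : Finset 𝒲, ↑t ⊆ X ∧ F = ctx.fspan ↑t

/-- `n < F`: every vector of `F` is supported on basis vectors of index `> n`. -/
def NatLt (n : ℕ) (F : Set 𝒲) : Prop :=
  ∀ x ∈ F, ∃ s : Finset ℕ, SuppIn ctx.e x s ∧ ∀ i ∈ s, n < i

/-- `V` is an `𝔽`-subspace of `𝒲`. -/
def IsSubspace (V : Set 𝒲) : Prop :=
  (0 : 𝒲) ∈ V ∧ (∀ u v : 𝒲, u ∈ V → v ∈ V → u + v ∈ V) ∧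
    ∀ c : ℝ, c ∈ ctx.𝔽 → ∀ v ∈ V, c • v ∈ V

/-- `V` is infinite-dimensional (not contained in a finitely generated subspace). -/
def IsInfDim (V : Set 𝒲) : Prop :=
  ¬∃ t : Finset 𝒲, V ⊆ ctx.fspan ↑t

/-- Game values of the asymptotic game `F^β_X`, for player II, computed by transfinite
recursion on the ordinal bound.  `IIWinsF X S β Facc vec` states: in the asymptotic game
below `X`, from a position where the vectors `vec` have been played and the
finite-dimensional subspaces played by II span `Facc`, and where I must now play a natural
number together with an ordinal `< β`, player II has a strategy so that the final outcome
lies in `S`. -/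
noncomputable def IIWinsF (X : Set 𝒲) (S : Set (List 𝒲)) :
    Ordinal → Set 𝒲 → List 𝒲 → Prop :=
  WellFounded.fix (C := fun _ : Ordinal => Set 𝒲 → List 𝒲 → Prop) Ordinal.lt_wf
    (fun β ih Facc vec =>
      ∀ n : ℕ, ∀ ξ : Ordinal, ∀ hξ : ξ < β,
        ∃ F : Set 𝒲, ctx.IsFinDimIn F X ∧ ctx.NatLt n F ∧
          ∃ x : 𝒲, x ≠ 0 ∧ x ∈ ctx.fspan (Facc ∪ F) ∧
            (ξ = 0 → vec ++ [x] ∈ S) ∧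
            (ξ ≠ 0 → ih ξ hξ (ctx.fspan (Facc ∪ F)) (vec ++ [x])))

/-- Player II has a strategy in the asymptotic game `F^β_X` to play an outcome in `S`. -/
noncomputable def IIStratF (X : Set 𝒲) (β : Ordinal) (S : Set (List 𝒲)) : Prop :=
  (β = 0 → ([] : List 𝒲) ∈ S) ∧ (β ≠ 0 → ctx.IIWinsF X S β (ctx.fspan ∅) [])

/-- Game values of the asymptotic game `F^β_X` for player I (who plays the integers and
the ordinals, trying to steer the outcome into `S`). -/
noncomputable def IWinsF (X : Set 𝒲) (S : Set (List 𝒲)) :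
    Ordinal → Set 𝒲 → List 𝒲 → Prop :=
  WellFounded.fix (C := fun _ : Ordinal => Set 𝒲 → List 𝒲 → Prop) Ordinal.lt_wf
    (fun β ih Facc vec =>
      ∃ n : ℕ, ∃ ξ : Ordinal, ∃ hξ : ξ < β,
        ∀ F : Set 𝒲, ctx.IsFinDimIn F X → ctx.NatLt n F →
        ∀ x : 𝒲, x ≠ 0 → x ∈ ctx.fspan (Facc ∪ F) →
          (ξ = 0 → vec ++ [x] ∈ S) ∧
          (ξ ≠ 0 → ih ξ hξ (ctx.fspan (Facc ∪ F)) (vec ++ [x])))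

/-- Player I has a strategy in the asymptotic game `F^β_X` to play an outcome in `S`. -/
noncomputable def IStratF (X : Set 𝒲) (β : Ordinal) (S : Set (List 𝒲)) : Prop :=
  (β = 0 → ([] : List 𝒲) ∈ S) ∧ (β ≠ 0 → ctx.IWinsF X S β (ctx.fspan ∅) [])

/-- Game values of the Gowers game `G^α_X` for player II. -/
noncomputable def IIWinsG (X : Set 𝒲) (S : Set (List 𝒲)) :
    Ordinal → Set 𝒲 → List 𝒲 → Prop :=
  WellFounded.fix (C := fun _ : Ordinal => Set 𝒲 → List 𝒲 → Prop) Ordinal.lt_wf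
    (fun α ih Facc vec =>
      ∀ Y : Set 𝒲, ctx.IsBlockSubspaceOf Y X →
      ∀ ξ : Ordinal, ∀ hξ : ξ < α,
        ∃ F : Set 𝒲, ctx.IsFinDimIn F Y ∧
          ∃ x : 𝒲, x ≠ 0 ∧ x ∈ ctx.fspan (Facc ∪ F) ∧
            (ξ = 0 → vec ++ [x] ∈ S) ∧
            (ξ ≠ 0 → ih ξ hξ (ctx.fspan (Facc ∪ F)) (vec ++ [x])))

/-- Player II has a strategy in the generalised Gowers game `G^α_X` to play in `S`. -/
noncomputable def IIStratG (X : Set 𝒲) (α : Ordinal) (S : Set (List 𝒲)) : Prop :=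
  (α = 0 → ([] : List 𝒲) ∈ S) ∧ (α ≠ 0 → ctx.IIWinsG X S α (ctx.fspan ∅) [])

/-- Game values of the adversarial game `A^α_X` for player II (who plays the integers,
the finite-dimensional subspaces `F_l ⊆ Y_l` and the vectors `y_l`). -/
noncomputable def IIWinsA (X : Set 𝒲) (S : Set (List 𝒲)) :
    Ordinal → Set 𝒲 → Set 𝒲 → List 𝒲 → Prop :=
  WellFounded.fix (C := fun _ : Ordinal => Set 𝒲 → Set 𝒲 → List 𝒲 → Prop)
    Ordinal.lt_wf
    (fun α ih Eacc Facc vec =>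
      ∃ n : ℕ,
        ∀ E : Set 𝒲, ctx.IsFinDimIn E X → ctx.NatLt n E →
        ∀ x : 𝒲, x ≠ 0 → x ∈ ctx.fspan (Eacc ∪ E) →
        ∀ Y : Set 𝒲, ctx.IsBlockSubspaceOf Y X →
        ∀ ξ : Ordinal, ∀ hξ : ξ < α,
          ∃ F : Set 𝒲, ctx.IsFinDimIn F Y ∧
            ∃ y : 𝒲, y ≠ 0 ∧ y ∈ ctx.fspan (Facc ∪ F) ∧
              (ξ = 0 → vec ++ [x, y] ∈ S) ∧
              (ξ ≠ 0 → ih ξ hξ (ctx.fspan (Eacc ∪ E)) (ctx.fspan (Facc ∪ F))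
                (vec ++ [x, y])))

/-- Player II has a strategy in the adversarial game `A^α_X` to play in `S`. -/
noncomputable def IIStratA (X : Set 𝒲) (α : Ordinal) (S : Set (List 𝒲)) : Prop :=
  (α = 0 → ([] : List 𝒲) ∈ S) ∧
  (α ≠ 0 → ctx.IIWinsA X S α (ctx.fspan ∅) (ctx.fspan ∅) [])

/-- Game values of the adversarial game `B^α_X` for player I (who plays the
finite-dimensional subspaces `E_l ⊆ Y_l`, the vectors `x_l`, the integers and the
ordinals). -/
noncomputable def IWinsB (X : Set 𝒲) (S : Set (List 𝒲)) :
    Ordinal → Set 𝒲 → Set 𝒲 → List 𝒲 → Prop :=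
  WellFounded.fix (C := fun _ : Ordinal => Set 𝒲 → Set 𝒲 → List 𝒲 → Prop)
    Ordinal.lt_wf
    (fun α ih Eacc Facc vec =>
      ∀ Y : Set 𝒲, ctx.IsBlockSubspaceOf Y X →
        ∃ E : Set 𝒲, ctx.IsFinDimIn E Y ∧
          ∃ x : 𝒲, x ≠ 0 ∧ x ∈ ctx.fspan (Eacc ∪ E) ∧
            ∃ n : ℕ, ∃ ξ : Ordinal, ∃ hξ : ξ < α,
              ∀ F : Set 𝒲, ctx.IsFinDimIn F X → ctx.NatLt n F →
              ∀ y : 𝒲, y ≠ 0 → y ∈ ctx.fspan (Facc ∪ F) →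
                (ξ = 0 → vec ++ [x, y] ∈ S) ∧
                (ξ ≠ 0 → ih ξ hξ (ctx.fspan (Eacc ∪ E)) (ctx.fspan (Facc ∪ F))
                  (vec ++ [x, y])))

/-- Player I has a strategy in the adversarial game `B^α_X` to play in `S`. -/
noncomputable def IStratB (X : Set 𝒲) (α : Ordinal) (S : Set (List 𝒲)) : Prop :=
  (α = 0 → ([] : List 𝒲) ∈ S) ∧
  (α ≠ 0 → ctx.IWinsB X S α (ctx.fspan ∅) (ctx.fspan ∅) [])

/-- Game values of the adversarial game `B^α_X` for player II (who plays the block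
subspaces `Y_l`, the finite-dimensional subspaces `F_l` and the vectors `y_l`). -/
noncomputable def IIWinsB (X : Set 𝒲) (S : Set (List 𝒲)) :
    Ordinal → Set 𝒲 → Set 𝒲 → List 𝒲 → Prop :=
  WellFounded.fix (C := fun _ : Ordinal => Set 𝒲 → Set 𝒲 → List 𝒲 → Prop)
    Ordinal.lt_wf
    (fun α ih Eacc Facc vec =>
      ∃ Y : Set 𝒲, ctx.IsBlockSubspaceOf Y X ∧
        ∀ E : Set 𝒲, ctx.IsFinDimIn E Y →
        ∀ x : 𝒲, x ≠ 0 → x ∈ ctx.fspan (Eacc ∪ E) →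
        ∀ n : ℕ, ∀ ξ : Ordinal, ∀ hξ : ξ < α,
          ∃ F : Set 𝒲, ctx.IsFinDimIn F X ∧ ctx.NatLt n F ∧
            ∃ y : 𝒲, y ≠ 0 ∧ y ∈ ctx.fspan (Facc ∪ F) ∧
              (ξ = 0 → vec ++ [x, y] ∈ S) ∧
              (ξ ≠ 0 → ih ξ hξ (ctx.fspan (Eacc ∪ E)) (ctx.fspan (Facc ∪ F))
                (vec ++ [x, y])))

/-- Player II has a strategy in the adversarial game `B^α_X` to play in `S`. -/
noncomputable def IIStratB (X : Set 𝒲) (α : Ordinal) (S : Set (List 𝒲)) : Prop :=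
  (α = 0 → ([] : List 𝒲) ∈ S) ∧
  (α ≠ 0 → ctx.IIWinsB X S α (ctx.fspan ∅) (ctx.fspan ∅) [])

end Frame

end Rosendal

namespace Rosendal

/-!
Fix `y`. Against each constant `K`, player I has a winning strategy, and only countably many
positions arise when player II plays subspaces `[x j : j ∈ D]` with `D` finite. Hence there are
intervals `I m = [α m, α (m + 1))` growing so fast that, at each such position and for all but
finitely many `m`, the integer played by I is below `α (m + 1)` as long as II has only used indices
below `α m`.

A normalised block sequence has uniformly bounded biorthogonal functionals, so exchanging
`x 0, …, x (d - 1)` with `x p, …, x (p + d - 1)` is an involution of norm at most `1 + 4 d M`, for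
every `p ≥ d`. Let `Z` be the span of the `x j` outside the `I m`, `m ∈ A`. Given `K`, choose a
large `a ∈ A` and move the first `d = α a` coordinates to the end of `I a`, beyond the first integer
of I against the constant `(1 + 4 d M) K`. This maps `T(y, Z, K)` into sequences that I's strategy
must avoid, but that II can play: at every move she takes all the moved indices up to a late gap
`I m`, so that the indices left out exceed I's next integer. The ordinals played by I therefore
decrease along the branches of the tree, and its rank is at most `β`.
-/

lemma tendsto_natCast_onePoint_infty :
    Tendsto ((↑) : ℕ → OnePoint ℕ) atTop (𝓝 OnePoint.infty) := by
  simpa [Nat.cofinite_eq_atTop] using OnePoint.tendsto_coe_infty (X := ℕ)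

section ConvergentSeries

variable {V : Type*} [NormedAddCommGroup V] [NormedSpace ℝ V]

/-- The space of formal series `∑ c i • e i` that converge, encoded by the continuous functions on
`ℕ ∪ {∞}` which send `n` to the `n`-th partial sum and `∞` to the limit; its norm is the supremum
of the norms of the partial sums. -/
def convergentSeries (e : ℕ → V) : Submodule ℝ C(OnePoint ℕ, V) where
  carrier := {f | ∃ c : ℕ → ℝ, ∀ n : ℕ, f n = ∑ i ∈ Finset.range n, c i • e i}
  zero_mem' := ⟨0, by simp⟩
  add_mem' := by
    rintro f g ⟨c, hc⟩ ⟨c', hc'⟩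
    exact ⟨c + c', fun n => by simp [hc, hc', add_smul, Finset.sum_add_distrib]⟩
  smul_mem' := by
    rintro r f ⟨c, hc⟩
    exact ⟨r • c, fun n => by simp [hc, Finset.smul_sum, smul_smul]⟩

lemma mem_convergentSeries_iff {e : ℕ → V} {f : C(OnePoint ℕ, V)} :
    f ∈ convergentSeries e ↔
      f (0 : ℕ) = 0 ∧ ∀ n : ℕ, f (n + 1 : ℕ) - f n ∈ Submodule.span ℝ {e n} := by
  simp only [Submodule.mem_span_singleton]
  constructor
  · rintro ⟨c, hc⟩
    exact ⟨by rw [hc]; simp, fun n => ⟨c n, by rw [hc, hc, Finset.sum_range_succ]; abel⟩⟩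
  · rintro ⟨h0, h⟩
    choose c hc using h
    refine ⟨c, fun n => ?_⟩
    induction n with
    | zero => simpa using h0
    | succ n ih => rw [Finset.sum_range_succ, ← ih, hc]; abel

lemma isClosed_convergentSeries (e : ℕ → V) :
    IsClosed (convergentSeries e : Set C(OnePoint ℕ, V)) := by
  have h_eq : (convergentSeries e : Set C(OnePoint ℕ, V)) = {f | f (0 : ℕ) = 0} ∩
      ⋂ n : ℕ, {f | f (n + 1 : ℕ) - f n ∈ Submodule.span ℝ {e n}} := by
    ext f
    simp [mem_convergentSeries_iff]
  rw [h_eq]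
  refine (isClosed_eq (continuous_eval_const _) continuous_const).inter
    (isClosed_iInter fun n => ?_)
  exact (Submodule.closed_of_finiteDimensional _).preimage
    ((continuous_eval_const _).sub (continuous_eval_const _))

end ConvergentSeries

section SchauderBasis

variable {𝒲 : Type} [NormedAddCommGroup 𝒲] [NormedSpace ℝ 𝒲] {e : ℕ → 𝒲}

lemma IsSchauderBasis.sum_eq_of_tendsto (he : IsSchauderBasis e) {a : ℕ → ℝ} {v : 𝒲}
    (ha : Tendsto (fun N => ∑ i ∈ Finset.range N, a i • e i) atTop (𝓝 v))
    {f : C(OnePoint ℕ, 𝒲)} (hf : f ∈ convergentSeries e) (hfv : f OnePoint.infty = v) (n : ℕ) :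
    f n = ∑ i ∈ Finset.range n, a i • e i := by
  obtain ⟨c, hc⟩ := hf
  have h_tendsto : Tendsto (fun N => ∑ i ∈ Finset.range N, c i • e i) atTop (𝓝 v) := by
    simpa only [Function.comp_def, hc, hfv] using
      (f.continuous.tendsto OnePoint.infty).comp tendsto_natCast_onePoint_infty
  rw [hc, (he v).unique h_tendsto ha]

/-- The open mapping theorem, applied to the map which sends a convergent series to its sum. -/
lemma IsSchauderBasis.exists_partialSum [CompleteSpace 𝒲] (he : IsSchauderBasis e) :
    ∃ S : ℕ → 𝒲 →L[ℝ] 𝒲, ∀ (v : 𝒲) (a : ℕ → ℝ),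
      Tendsto (fun N => ∑ i ∈ Finset.range N, a i • e i) atTop (𝓝 v) →
        ∀ n, S n v = ∑ i ∈ Finset.range n, a i • e i := by
  have : CompleteSpace (convergentSeries e) := (isClosed_convergentSeries e).completeSpace_coe
  let L : convergentSeries e →L[ℝ] 𝒲 :=
    (ContinuousMap.evalCLM ℝ OnePoint.infty).comp (convergentSeries e).subtypeL
  have h_inj : Function.Injective L := by
    intro f g hfg
    obtain ⟨a, ha, -⟩ := he (L g)
    have h_nat (n : ℕ) : f.1 n = g.1 n := by
      rw [he.sum_eq_of_tendsto ha f.2 hfg, he.sum_eq_of_tendsto ha g.2 rfl]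
    ext p
    induction p using OnePoint.rec with
    | infty => exact hfg
    | coe n => exact h_nat n
  have h_surj : Function.Surjective L := by
    intro v
    obtain ⟨a, ha, -⟩ := he v
    exact ⟨⟨OnePoint.continuousMapMkNat _ v ha, a, fun _ => rfl⟩, rfl⟩
  let Φ : convergentSeries e ≃L[ℝ] 𝒲 := .ofBijective L
    (LinearMap.ker_eq_bot.2 h_inj) (LinearMap.range_eq_top.2 h_surj)
  refine ⟨fun n => (ContinuousMap.evalCLM ℝ (n : OnePoint ℕ)).comp
    ((convergentSeries e).subtypeL.comp (Φ.symm : 𝒲 →L[ℝ] convergentSeries e)), ?_⟩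
  intro v a ha n
  exact he.sum_eq_of_tendsto ha (Φ.symm v).2 (Φ.apply_symm_apply v) n

lemma IsSchauderBasis.ne_zero (he : IsSchauderBasis e) (n : ℕ) : e n ≠ 0 := by
  intro hn
  have h_zero : Tendsto (fun N => ∑ i ∈ Finset.range N, (0 : ℕ → ℝ) i • e i) atTop (𝓝 0) := by
    simp
  have h_single : Tendsto (fun N => ∑ i ∈ Finset.range N, (Pi.single n 1 : ℕ → ℝ) i • e i)
      atTop (𝓝 0) := by
    have h_sum (N : ℕ) : ∑ i ∈ Finset.range N, (Pi.single n 1 : ℕ → ℝ) i • e i = 0 :=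
      Finset.sum_eq_zero fun i _ => by by_cases h : i = n <;> simp [h, hn]
    simp only [h_sum, tendsto_const_nhds]
  simpa using congrFun ((he 0).unique h_single h_zero) n

lemma IsSchauderBasis.exists_schauderBasis [CompleteSpace 𝒲] (he : IsSchauderBasis e) :
    ∃ b : SchauderBasis ℝ 𝒲, ⇑b = e := by
  obtain ⟨S, hS⟩ := he.exists_partialSum
  choose φ hφ using fun n => SeparatingDual.exists_eq_one (R := ℝ) (he.ne_zero n)
  let coord (n : ℕ) : StrongDual ℝ 𝒲 := (φ n).comp (S (n + 1) - S n)
  have h_coord {v : 𝒲} {a : ℕ → ℝ}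
      (ha : Tendsto (fun N => ∑ i ∈ Finset.range N, a i • e i) atTop (𝓝 v)) (n : ℕ) :
      coord n v = a n := by
    simp [coord, hS v a ha, Finset.sum_range_succ, hφ]
  refine ⟨⟨e, coord, fun i j => h_coord ?_ i, fun v => ?_⟩, rfl⟩
  · refine tendsto_const_nhds.congr' ?_
    filter_upwards [eventually_gt_atTop j] with N hN
    rw [Finset.sum_eq_single_of_mem j (Finset.mem_range.2 hN) fun i _ hij => by simp [hij]]
    simp
  · obtain ⟨a, ha, -⟩ := he v
    simp only [HasSum, SummationFilter.conditional_filter_eq_map_range, tendsto_map'_iff,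
      h_coord ha]
    exact ha

end SchauderBasis

section Biorthogonal

variable {V : Type*} [NormedAddCommGroup V] [NormedSpace ℝ V]

lemma proj_eq_self_of_mem_span {b : SchauderBasis ℝ V} {s : Set ℕ} {n : ℕ} (hs : ∀ i ∈ s, i < n)
    {v : V} (hv : v ∈ Submodule.span ℝ (b '' s)) : b.proj n v = v := by
  have h_eqOn : Set.EqOn (b.proj n) (ContinuousLinearMap.id ℝ V) (b '' s) := by
    rintro _ ⟨i, hi, rfl⟩
    rw [b.proj_apply_basis_mem, if_pos (hs i hi)]
    rfl
  exact LinearMap.eqOn_span h_eqOn hv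

lemma proj_eq_zero_of_mem_span {b : SchauderBasis ℝ V} {s : Set ℕ} {n : ℕ} (hs : ∀ i ∈ s, n ≤ i)
    {v : V} (hv : v ∈ Submodule.span ℝ (b '' s)) : b.proj n v = 0 := by
  have h_eqOn : Set.EqOn (b.proj n) (0 : V →L[ℝ] V) (b '' s) := by
    rintro _ ⟨i, hi, rfl⟩
    rw [b.proj_apply_basis_mem, if_neg (hs i hi).not_gt]
    rfl
  exact LinearMap.eqOn_span h_eqOn hv

/-- The functionals `f i` are biorthogonal to the vectors `x i`. -/
def IsBiorthogonal (f : ℕ → StrongDual ℝ V) (x : ℕ → V) : Prop :=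
  ∀ i j, f i (x j) = if i = j then 1 else 0

lemma exists_isBiorthogonal_of_span [CompleteSpace V] (b : SchauderBasis ℝ V) {x : ℕ → V}
    (hx : ∀ n, ‖x n‖ = 1) {D : ℕ → Finset ℕ} (hne : ∀ n, (D n).Nonempty)
    (hD : ∀ n, x n ∈ Submodule.span ℝ (b '' D n))
    (hlt : ∀ k m, k < m → ∀ i ∈ D k, ∀ j ∈ D m, i < j) :
    ∃ (M : ℝ) (f : ℕ → StrongDual ℝ V), (∀ n, ‖f n‖ ≤ M) ∧ IsBiorthogonal f x := by
  obtain ⟨C, hC⟩ := b.exists_norm_proj_le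
  choose φ hφ_norm hφ using fun n => exists_dual_vector'' ℝ (x n)
  let m (n : ℕ) : ℕ := (D n).min' (hne n)
  have h_proj (n k : ℕ) : b.proj (m n) (x k) = if k < n then x k else 0 := by
    split_ifs with hkn
    · exact proj_eq_self_of_mem_span (fun i hi => hlt k n hkn i hi _ (Finset.min'_mem _ _)) (hD k)
    · refine proj_eq_zero_of_mem_span (fun i hi => ?_) (hD k)
      obtain rfl | hnk := (not_lt.1 hkn).eq_or_lt
      · exact Finset.min'_le _ _ hi
      · exact (hlt n k hnk _ (Finset.min'_mem _ _) i hi).le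
  refine ⟨C + C, fun n => (φ n).comp (b.proj (m (n + 1)) - b.proj (m n)), fun n => ?_, ?_⟩
  · calc ‖(φ n).comp (b.proj (m (n + 1)) - b.proj (m n))‖
        ≤ ‖φ n‖ * ‖b.proj (m (n + 1)) - b.proj (m n)‖ := ContinuousLinearMap.opNorm_comp_le _ _
      _ ≤ 1 * (‖b.proj (m (n + 1))‖ + ‖b.proj (m n)‖) := by
        gcongr
        exacts [hφ_norm n, norm_sub_le _ _]
      _ ≤ C + C := by
        rw [one_mul]
        exact add_le_add (hC _) (hC _)
  · intro n k
    simp only [ContinuousLinearMap.comp_apply, sub_apply, h_proj]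
    obtain hkn | rfl | hnk := lt_trichotomy k n
    · simp [hkn, hkn.ne', hkn.trans n.lt_succ_self]
    · simp [hφ, hx]
    · simp [hnk.ne, hnk.not_gt, (Nat.succ_le_of_lt hnk).not_gt]

/-- The operator which exchanges `x j` and `x (p + j)` for each `j < d`, written in terms of a
system of functionals biorthogonal to `x`. -/
noncomputable def swapOp (f : ℕ → StrongDual ℝ V) (x : ℕ → V) (d p : ℕ) : V →L[ℝ] V :=
  ContinuousLinearMap.id ℝ V +
    ∑ j ∈ Finset.range d, (f j - f (p + j)).smulRight (x (p + j) - x j)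

variable {f : ℕ → StrongDual ℝ V} {x : ℕ → V} {d p : ℕ}

lemma swapOp_apply (v : V) : swapOp f x d p v =
    v + ∑ j ∈ Finset.range d, (f j v - f (p + j) v) • (x (p + j) - x j) := by
  simp [swapOp]

lemma IsBiorthogonal.swapOp_apply_of_lt (h : IsBiorthogonal f x) (hdp : d ≤ p) {i : ℕ}
    (hi : i < d) : swapOp f x d p (x i) = x (p + i) := by
  rw [swapOp_apply, Finset.sum_eq_single_of_mem i (Finset.mem_range.2 hi)]
  · have hp : p ≠ 0 := by omega
    simp [h _ _, hp]
  · intro j _ hji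
    have hne : p + j ≠ i := by omega
    simp [h _ _, hji, hne]

lemma IsBiorthogonal.swapOp_apply_of_le (h : IsBiorthogonal f x) {i : ℕ} (hi : p + d ≤ i) :
    swapOp f x d p (x i) = x i := by
  rw [swapOp_apply, Finset.sum_eq_zero, add_zero]
  intro j hj
  have hjd := Finset.mem_range.1 hj
  have hne : j ≠ i ∧ p + j ≠ i := by omega
  simp [h _ _, hne]

/-- With `g j = f j - f (p + j)` and `u j = x (p + j) - x j`, this is `g j (u k) = -2 δ_{jk}`. -/
lemma IsBiorthogonal.swapOp_swapOp (h : IsBiorthogonal f x) (hdp : d ≤ p) (v : V) :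
    swapOp f x d p (swapOp f x d p v) = v := by
  have h_pair {j k : ℕ} (hj : j < d) (hk : k < d) :
      f j (x (p + k) - x k) - f (p + j) (x (p + k) - x k) = if k = j then -2 else 0 := by
    obtain rfl | hkj := eq_or_ne k j
    · have hp : p ≠ 0 := by omega
      simp only [map_sub, h _ _, right_eq_add, add_eq_right, hp, if_true, if_false]
      norm_num
    · have hne : j ≠ p + k ∧ p + j ≠ k := by omega
      simp [h _ _, hne, hkj, hkj.symm]
  let g (j : ℕ) : ℝ := f j v - f (p + j) v
  have h_coord {j : ℕ} (hj : j < d) :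
      f j (swapOp f x d p v) - f (p + j) (swapOp f x d p v) = -g j := by
    have h_sum : ∑ k ∈ Finset.range d,
        g k * (f j (x (p + k) - x k) - f (p + j) (x (p + k) - x k)) = g j * -2 := by
      rw [Finset.sum_congr rfl fun k hk => by rw [h_pair hj (Finset.mem_range.1 hk)]]
      simp [hj]
    simp only [mul_sub, Finset.sum_sub_distrib] at h_sum
    simp only [swapOp_apply, map_add, map_sum, map_smul, smul_eq_mul, map_sub] at h_sum ⊢
    linarith
  rw [swapOp_apply, Finset.sum_congr rfl fun j hj => by rw [h_coord (Finset.mem_range.1 hj)],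
    swapOp_apply]
  simp only [g, neg_smul, Finset.sum_neg_distrib, add_neg_cancel_right]

lemma norm_swapOp_apply_le {M : ℝ} (hM : ∀ n, ‖f n‖ ≤ M) (hx : ∀ n, ‖x n‖ = 1) (v : V) :
    ‖swapOp f x d p v‖ ≤ (1 + 4 * d * M) * ‖v‖ := by
  have h_coord (j : ℕ) : ‖f j v‖ ≤ M * ‖v‖ := (f j).le_of_opNorm_le (hM j) v
  have : 0 ≤ M * ‖v‖ := (norm_nonneg _).trans (h_coord 0)
  have h_term (j : ℕ) : ‖(f j v - f (p + j) v) • (x (p + j) - x j)‖ ≤ 4 * (M * ‖v‖) :=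
    calc ‖(f j v - f (p + j) v) • (x (p + j) - x j)‖
        = ‖f j v - f (p + j) v‖ * ‖x (p + j) - x j‖ := norm_smul _ _
      _ ≤ (‖f j v‖ + ‖f (p + j) v‖) * (‖x (p + j)‖ + ‖x j‖) := by
        gcongr <;> exact norm_sub_le _ _
      _ ≤ (M * ‖v‖ + M * ‖v‖) * (1 + 1) := by
        rw [hx, hx]
        gcongr <;> exact h_coord _
      _ = 4 * (M * ‖v‖) := by ring
  calc ‖swapOp f x d p v‖
      ≤ ‖v‖ + ‖∑ j ∈ Finset.range d, (f j v - f (p + j) v) • (x (p + j) - x j)‖ := by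
        rw [swapOp_apply]
        exact norm_add_le _ _
    _ ≤ ‖v‖ + ∑ _j ∈ Finset.range d, 4 * (M * ‖v‖) := by
        gcongr
        exact norm_sum_le_of_le _ fun j _ => h_term j
    _ = (1 + 4 * d * M) * ‖v‖ := by
        simp only [Finset.sum_const, Finset.card_range, nsmul_eq_mul]
        ring

end Biorthogonal

section SequenceEquivalence

variable {V : Type} [NormedAddCommGroup V] [NormedSpace ℝ V] {K K' : ℝ} {y : ℕ → V} {l : List V}

lemma seqEquiv_iff (hK : 0 < K) {k : ℕ} {x y : ℕ → V} : SeqEquiv K k x y ↔ ∀ a : ℕ → ℝ,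
    ‖∑ i ∈ Finset.range k, a i • x i‖ ≤ K * ‖∑ i ∈ Finset.range k, a i • y i‖ ∧
      ‖∑ i ∈ Finset.range k, a i • y i‖ ≤ K * ‖∑ i ∈ Finset.range k, a i • x i‖ := by
  simp only [SeqEquiv, one_div, inv_mul_le_iff₀ hK]

lemma outcomeEquiv_nil (K : ℝ) (y : ℕ → V) : OutcomeEquiv K [] y :=
  fun a => by simp

lemma OutcomeEquiv.mono (hK : 0 < K) (hKK' : K ≤ K') (h : OutcomeEquiv K l y) :
    OutcomeEquiv K' l y := by
  rw [OutcomeEquiv, seqEquiv_iff hK] at h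
  rw [OutcomeEquiv, seqEquiv_iff (hK.trans_le hKK')]
  intro a
  obtain ⟨h₁, h₂⟩ := h a
  exact ⟨h₁.trans (by gcongr), h₂.trans (by gcongr)⟩

lemma OutcomeEquiv.of_prefix {s : List V} (hsl : s <+: l) (h : OutcomeEquiv K l y) :
    OutcomeEquiv K s y := by
  obtain ⟨r, rfl⟩ := hsl
  intro a
  have h_ext (z : ℕ → V) :
      ∑ i ∈ Finset.range (s ++ r).length, (if i < s.length then a i else 0) • z i =
        ∑ i ∈ Finset.range s.length, a i • z i := by
    rw [← Finset.sum_subset (Finset.range_mono (by simp : s.length ≤ (s ++ r).length))]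
    · exact Finset.sum_congr rfl fun i hi => by rw [if_pos (Finset.mem_range.1 hi)]
    · intro i _ hi
      rw [if_neg (by simpa using hi), zero_smul]
  have h_append : ∑ i ∈ Finset.range s.length, a i • (s ++ r).getD i 0 =
      ∑ i ∈ Finset.range s.length, a i • s.getD i 0 :=
    Finset.sum_congr rfl fun i hi => by rw [List.getD_append _ _ _ _ (Finset.mem_range.1 hi)]
  simpa only [h_ext, h_append] using h fun i => if i < s.length then a i else 0

lemma OutcomeEquiv.ne_zero (hy : ∀ n, y n ≠ 0) (h : OutcomeEquiv K l y) {v : V} (hv : v ∈ l) :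
    v ≠ 0 := by
  rintro rfl
  obtain ⟨n, hn, hn_zero⟩ := List.mem_iff_getElem.1 hv
  have h_single (z : ℕ → V) :
      ∑ i ∈ Finset.range l.length, (Pi.single n 1 : ℕ → ℝ) i • z i = z n := by
    rw [Finset.sum_eq_single_of_mem n (Finset.mem_range.2 hn) fun i _ hin => by simp [hin]]
    simp
  have h_le := (h (Pi.single n 1)).2
  simp only [h_single, List.getD_eq_getElem _ _ hn, hn_zero, norm_zero, mul_zero] at h_le
  exact hy n (norm_le_zero_iff.1 h_le)

lemma OutcomeEquiv.map {c : ℝ} (hK : 0 < K) (hc : 0 < c) {T : V →ₗ[ℝ] V}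
    (hT : ∀ v, ‖T v‖ ≤ c * ‖v‖) (hT' : ∀ v, ‖v‖ ≤ c * ‖T v‖) (h : OutcomeEquiv K l y) :
    OutcomeEquiv (c * K) (l.map T) y := by
  rw [OutcomeEquiv, seqEquiv_iff hK] at h
  rw [OutcomeEquiv, seqEquiv_iff (mul_pos hc hK), List.length_map]
  intro a
  have h_map : ∑ i ∈ Finset.range l.length, a i • (l.map T).getD i 0 =
      T (∑ i ∈ Finset.range l.length, a i • l.getD i 0) := by
    rw [map_sum]
    refine Finset.sum_congr rfl fun i _ => ?_
    have h_getD := List.getD_map (l := l) (d := 0) (n := i) T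
    rw [map_zero] at h_getD
    rw [h_getD, map_smul]
  rw [h_map]
  set v := ∑ i ∈ Finset.range l.length, a i • l.getD i 0
  set w := ∑ i ∈ Finset.range l.length, a i • y i
  obtain ⟨hvw, hwv⟩ := h a
  constructor
  · calc ‖T v‖ ≤ c * ‖v‖ := hT v
      _ ≤ c * (K * ‖w‖) := by gcongr
      _ = c * K * ‖w‖ := by ring
  · calc ‖w‖ ≤ K * ‖v‖ := hwv
      _ ≤ K * (c * ‖T v‖) := by
        gcongr
        exact hT' v
      _ = c * K * ‖T v‖ := by ring

lemma embTree_of_prefix {Y : Set V} {s : List V} (hsl : s <+: l) (hl : l ∈ embTree y Y K) :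
    s ∈ embTree y Y K :=
  ⟨fun v hv => hl.1 v (hsl.subset hv), OutcomeEquiv.of_prefix hsl hl.2⟩

end SequenceEquivalence

section Rank

variable {V : Type}

lemma exists_acc_rank_lt {T : Set (List V)} (hT : ∀ {s t}, s <+: t → t ∈ T → s ∈ T)
    {Good : Ordinal.{0} → List V → Prop}
    (h_step : ∀ ξ, ∀ s ∈ T, Good ξ s → ∃ ξ' < ξ, ∀ v, s ++ [v] ∈ T → Good ξ' (s ++ [v]))
    {ξ : Ordinal.{0}} {s : List V} (hs : s ∈ T) (h : Good ξ s) {t : List V} (ht : t ∈ T)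
    (hst : s <+: t) :
    ∃ h_acc : Acc (fun t s : T => s.val <+: t.val ∧ s.val ≠ t.val) ⟨t, ht⟩, h_acc.rank < ξ := by
  induction ξ using WellFoundedLT.induction generalizing s t with
  | ind ξ ih =>
  obtain ⟨ξ', hξ', h_child⟩ := h_step ξ s hs h
  have h_extension (u : T) (hu : s <+: u.val ∧ s ≠ u.val) :
      ∃ h_acc : Acc (fun t s : T => s.val <+: t.val ∧ s.val ≠ t.val) u, h_acc.rank < ξ' := by
    obtain ⟨⟨_ | ⟨v, r⟩, hr⟩, hne⟩ := hu
    · simp [hne] at hr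
    · have h_prefix : s ++ [v] <+: u.val := ⟨r, by simpa using hr⟩
      have hv : s ++ [v] ∈ T := hT h_prefix u.2
      exact ih ξ' hξ' hv (h_child v hv) u.2 h_prefix
  obtain rfl | hne := eq_or_ne s t
  · refine ⟨.intro _ fun u hu => (h_extension u hu).1, lt_of_le_of_lt ?_ hξ'⟩
    rw [Acc.rank_eq]
    exact ciSup_le' fun u => Order.succ_le_of_lt (h_extension u.1 u.2).2
  · obtain ⟨h_acc, h_rank⟩ := h_extension ⟨t, ht⟩ ⟨hst, hne⟩
    exact ⟨h_acc, h_rank.trans hξ'⟩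

lemma treeRank_le_of_descent {T : Set (List V)} (hT : ∀ {s t}, s <+: t → t ∈ T → s ∈ T)
    (Good : Ordinal.{0} → List V → Prop)
    (h_step : ∀ ξ, ∀ s ∈ T, Good ξ s → ∃ ξ' < ξ, ∀ v, s ++ [v] ∈ T → Good ξ' (s ++ [v]))
    {β : Ordinal.{0}} (h_nil : Good β []) : treeRank T ≤ (β : WithTop Ordinal) := by
  have h_acc (t : T) := exists_acc_rank_lt hT h_step (hT List.nil_prefix t.2) h_nil t.2
    List.nil_prefix
  rw [treeRank, dif_pos ⟨fun t => (h_acc t).1⟩, WithTop.coe_le_coe]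
  exact ciSup_le' fun t => Order.succ_le_of_lt (h_acc t).2

lemma embIndex_le [NormedAddCommGroup V] [NormedSpace ℝ V] {y : ℕ → V} {Y : Set V}
    {β : Ordinal.{0}} (h : ∀ K : ℝ, 1 ≤ K → treeRank (embTree y Y K) ≤ (β : WithTop Ordinal)) :
    embIndex y Y ≤ (β : WithTop Ordinal) := by
  rw [embIndex, if_neg, WithTop.coe_le_coe]
  · refine csSup_le' ?_
    rintro o ⟨K, hK, ho⟩
    exact WithTop.coe_le_coe.1 (ho ▸ h K hK)
  · rintro ⟨K, hK, h_top⟩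
    exact WithTop.coe_ne_top (top_le_iff.1 (h_top ▸ h K hK))

end Rank

namespace Frame

variable {V : Type} [NormedAddCommGroup V] [NormedSpace ℝ V] (ctx : Frame V)

lemma fspan_eq_span (S : Set V) : ctx.fspan S = Submodule.span ctx.𝔽 S := by
  ext v
  constructor
  · rintro ⟨t, ht, c, hc, rfl⟩
    exact Submodule.sum_mem _ fun w hw =>
      Submodule.smul_mem _ (⟨c w, hc w⟩ : ctx.𝔽) (Submodule.subset_span (ht hw))
  · intro hv
    obtain ⟨c, t, ht, -, rfl⟩ := Submodule.mem_span_iff_exists_finset_subset.1 hv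
    exact ⟨t, ht, fun w => c w, fun w => (c w).2, rfl⟩

lemma fspan_mono {S S' : Set V} (h : S ⊆ S') : ctx.fspan S ⊆ ctx.fspan S' := by
  simp only [fspan_eq_span]
  exact Submodule.span_mono h

lemma subset_fspan (S : Set V) : S ⊆ ctx.fspan S := by
  simpa only [fspan_eq_span] using Submodule.subset_span

lemma fspan_union_fspan (S S' : Set V) :
    ctx.fspan (ctx.fspan S ∪ ctx.fspan S') = ctx.fspan (S ∪ S') := by
  simp only [fspan_eq_span, Submodule.span_union, Submodule.span_span]

lemma fspan_subset_span_real (S : Set V) : ctx.fspan S ⊆ Submodule.span ℝ S := by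
  rw [fspan_eq_span]
  exact Submodule.span_subset_span ctx.𝔽 ℝ S

lemma countable_fspan {S : Set V} (hS : S.Countable) : (ctx.fspan S).Countable := by
  have : Countable ctx.𝔽 := ctx.countable.to_subtype
  have : Countable S := hS.to_subtype
  have h_range : ctx.fspan S = Set.range (Finsupp.linearCombination ctx.𝔽 ((↑) : S → V)) := by
    rw [fspan_eq_span, ← LinearMap.coe_range, Finsupp.range_linearCombination, Subtype.range_coe]
  rw [h_range]
  exact Set.countable_range _

lemma map_mem_fspan {S : Set V} (T : V →ₗ[ℝ] V) {v : V} (hv : v ∈ ctx.fspan S) :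
    T v ∈ ctx.fspan (T '' S) := by
  rw [fspan_eq_span] at hv ⊢
  have h_map := Submodule.mem_map_of_mem (f := T.restrictScalars ctx.𝔽) hv
  rwa [Submodule.map_span] at h_map

lemma eventually_mem_fspan_image {x : ℕ → V} {J : Set ℕ} {v : V} (hv : v ∈ ctx.fspan (x '' J)) :
    ∀ᶠ N in atTop, v ∈ ctx.fspan (x '' (J ∩ Set.Iio N)) := by
  obtain ⟨t, ht, c, hc, rfl⟩ := hv
  classical
  obtain ⟨s, hsJ, rfl⟩ := Finset.subset_set_image_iff.1 ht
  filter_upwards [(Finset.eventually_all s).2 fun j _ => eventually_gt_atTop j] with N hN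
  refine ⟨s.image x, ?_, c, hc, rfl⟩
  rw [Finset.coe_image]
  exact Set.image_mono fun j hj => ⟨hsJ hj, hN j hj⟩

end Frame

section BlockSequences

lemma lt_of_successive {D : ℕ → Finset ℕ} (hne : ∀ n, (D n).Nonempty)
    (hlt : ∀ n, ∀ i ∈ D n, ∀ j ∈ D (n + 1), i < j) {k m : ℕ} (hkm : k < m) :
    ∀ i ∈ D k, ∀ j ∈ D m, i < j := by
  induction m, hkm using Nat.le_induction with
  | base => exact hlt k
  | succ m _ ih =>
    intro i hi j hj
    obtain ⟨q, hq⟩ := hne m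
    exact (ih i hi q hq).trans (hlt m q hq j hj)

lemma le_of_mem_of_successive {D : ℕ → Finset ℕ} (hne : ∀ n, (D n).Nonempty)
    (hlt : ∀ k m, k < m → ∀ i ∈ D k, ∀ j ∈ D m, i < j) {n i : ℕ} (hi : i ∈ D n) : n ≤ i :=
  have h_min : StrictMono fun n => (D n).min' (hne n) := fun k m hkm =>
    hlt k m hkm _ (Finset.min'_mem _ _) _ (Finset.min'_mem _ _)
  (h_min.le_apply).trans (Finset.min'_le _ _ hi)

variable {V : Type} [NormedAddCommGroup V] [NormedSpace ℝ V]

lemma suppIn_iff_mem_span {b : ℕ → V} {v : V} {s : Finset ℕ} :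
    SuppIn b v s ↔ v ∈ Submodule.span ℝ (b '' s) := by
  simp only [SuppIn, Submodule.mem_span_image_finset_iff_exists_fun', eq_comm]

variable {ctx : Frame V} {x : ℕ → V}

namespace Frame

lemma IsBlockSeq.exists_support (hx : ctx.IsBlockSeq x) : ∃ D : ℕ → Finset ℕ,
    (∀ n, (D n).Nonempty) ∧ (∀ n, x n ∈ Submodule.span ℝ (ctx.e '' D n)) ∧
      ∀ k m, k < m → ∀ i ∈ D k, ∀ j ∈ D m, i < j := by
  obtain ⟨-, hx_ne, D, hD, hlt⟩ := hx
  have hD_span n := suppIn_iff_mem_span.1 (hD n)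
  have hne (n : ℕ) : (D n).Nonempty := by
    by_contra! h_empty
    have h_mem := hD_span n
    simp only [h_empty, Finset.coe_empty, Set.image_empty, Submodule.span_empty,
      Submodule.mem_bot] at h_mem
    exact hx_ne n h_mem
  exact ⟨D, hne, hD_span, fun _ _ => lt_of_successive hne hlt⟩

lemma IsBlockSeq.exists_isBiorthogonal (hx : ctx.IsBlockSeq x) (hxn : ∀ n, ‖x n‖ = 1) :
    ∃ (M : ℝ) (f : ℕ → V →L[ℝ] ℝ), (∀ n, ‖f n‖ ≤ M) ∧ IsBiorthogonal f x := by
  have := ctx.complete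
  obtain ⟨b, hb⟩ := ctx.basis.exists_schauderBasis
  obtain ⟨D, hne, hD, hlt⟩ := hx.exists_support
  exact exists_isBiorthogonal_of_span b hxn hne (by simpa only [hb] using hD) hlt

lemma IsBlockSeq.natLt_fspan (hx : ctx.IsBlockSeq x) {n : ℕ} {s : Set ℕ} (hs : ∀ j ∈ s, n < j) :
    ctx.NatLt n (ctx.fspan (x '' s)) := by
  obtain ⟨D, hne, hD, hlt⟩ := hx.exists_support
  intro v hv
  have h_tail : Submodule.span ℝ (x '' s) ≤ Submodule.span ℝ (ctx.e '' Set.Ioi n) := by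
    rw [Submodule.span_le]
    rintro _ ⟨j, hj, rfl⟩
    exact Submodule.span_mono (Set.image_mono fun i hi =>
      (hs j hj).trans_le (le_of_mem_of_successive hne hlt hi)) (hD j)
  obtain ⟨t, ht, hvt⟩ := (Submodule.mem_span_image_iff_exists_fun ℝ).1
    (h_tail (ctx.fspan_subset_span_real _ hv))
  exact ⟨t, suppIn_iff_mem_span.2 ((Submodule.mem_span_image_finset_iff_exists_fun ℝ).2 hvt),
    fun i hi => ht hi⟩

end Frame

end BlockSequences

namespace Frame

variable {V : Type} [NormedAddCommGroup V] [NormedSpace ℝ V] {ctx : Frame V} {x : ℕ → V}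
  {S : Set (List V)}

/-- `n D s` is a winning integer move of player I in the asymptotic game below `[x n]` with target
`S`, at every position won by I in which `s` has been played and the subspaces played by II span
`[x j : j ∈ D]`. The integer does not depend on the ordinal bound `γ`, and only replies of II by
subspaces spanned by finitely many terms of `x` are considered. -/
def IsIntegerStrategy (ctx : Frame V) (x : ℕ → V) (S : Set (List V))
    (n : Finset ℕ → List V → ℕ) : Prop :=
  ∀ (γ : Ordinal.{0}) (D : Finset ℕ) (s : List V),
    ctx.IWinsF (ctx.fspan (Set.range x)) S γ (ctx.fspan (x '' D)) s →
    ∃ ξ < γ, ∀ D' : Finset ℕ, D ⊆ D' → (∀ j ∈ D', j ∉ D → n D s < j) →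
      ∀ u ∈ ctx.fspan (x '' D'), u ≠ 0 → s ++ [u] ∉ S →
        ctx.IWinsF (ctx.fspan (Set.range x)) S ξ (ctx.fspan (x '' D')) (s ++ [u])

lemma IsBlockSeq.exists_move_of_iWinsF (hx : ctx.IsBlockSeq x) {γ : Ordinal.{0}} {D : Finset ℕ}
    {s : List V} (h : ctx.IWinsF (ctx.fspan (Set.range x)) S γ (ctx.fspan (x '' D)) s) :
    ∃ n : ℕ, ∃ ξ < γ, ∀ D' : Finset ℕ, D ⊆ D' → (∀ j ∈ D', j ∉ D → n < j) →
      ∀ u ∈ ctx.fspan (x '' D'), u ≠ 0 → s ++ [u] ∉ S →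
        ctx.IWinsF (ctx.fspan (Set.range x)) S ξ (ctx.fspan (x '' D')) (s ++ [u]) := by
  classical
  rw [IWinsF, WellFounded.fix_eq] at h
  obtain ⟨n, ξ, hξ, h⟩ := h
  refine ⟨n, ξ, hξ, fun D' hDD' hn u hu hu_ne hus => ?_⟩
  have h_union : ctx.fspan (ctx.fspan (x '' D) ∪ ctx.fspan (x '' (D' \ D))) =
      ctx.fspan (x '' D') := by
    rw [fspan_union_fspan, ← Set.image_union, Set.union_sdiff_cancel (by exact_mod_cast hDD')]
  have h_finDim : ctx.IsFinDimIn (ctx.fspan (x '' (D' \ D))) (ctx.fspan (Set.range x)) := by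
    refine ⟨(D' \ D).image x, ?_, by push_cast; rfl⟩
    push_cast
    exact (Set.image_subset_range _ _).trans (ctx.subset_fspan _)
  have h_natLt : ctx.NatLt n (ctx.fspan (x '' (D' \ D))) :=
    hx.natLt_fspan fun j hj => hn j hj.1 hj.2
  obtain ⟨h_end, h_continue⟩ := h _ h_finDim h_natLt u hu_ne (by rwa [h_union])
  rw [h_union] at h_continue
  exact h_continue fun hξ_zero => hus (h_end hξ_zero)

lemma IsBlockSeq.exists_isIntegerStrategy (hx : ctx.IsBlockSeq x) (S : Set (List V)) :
    ∃ n, IsIntegerStrategy ctx x S n := by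
  have h_move (D : Finset ℕ) (s : List V) : ∃ n : ℕ, ∀ γ : Ordinal.{0},
      ctx.IWinsF (ctx.fspan (Set.range x)) S γ (ctx.fspan (x '' D)) s →
      ∃ ξ < γ, ∀ D' : Finset ℕ, D ⊆ D' → (∀ j ∈ D', j ∉ D → n < j) →
        ∀ u ∈ ctx.fspan (x '' D'), u ≠ 0 → s ++ [u] ∉ S →
          ctx.IWinsF (ctx.fspan (Set.range x)) S ξ (ctx.fspan (x '' D')) (s ++ [u]) := by
    by_cases h_win : ∃ γ, ctx.IWinsF (ctx.fspan (Set.range x)) S γ (ctx.fspan (x '' D)) s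
    -- A winning move for the least winning ordinal bound also wins for the larger ones.
    · obtain ⟨γ₀, h_win₀, h_least⟩ := WellFounded.has_min (wellFounded_lt (α := Ordinal))
        {γ | ctx.IWinsF (ctx.fspan (Set.range x)) S γ (ctx.fspan (x '' D)) s} h_win
      obtain ⟨n, ξ, hξ, h_next⟩ := hx.exists_move_of_iWinsF h_win₀
      exact ⟨n, fun γ h => ⟨ξ, hξ.trans_le (not_lt.1 (h_least γ h)), h_next⟩⟩
    · exact ⟨0, fun γ h => (h_win ⟨γ, h⟩).elim⟩
  choose n hn using h_move
  exact ⟨n, fun γ D s => hn D s γ⟩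

lemma IStratF.iWinsF {X : Set V} {β : Ordinal.{0}} (h : ctx.IStratF X β S) (h_nil : [] ∉ S) :
    ctx.IWinsF X S β (ctx.fspan ∅) [] :=
  h.2 fun hβ => h_nil (h.1 hβ)

end Frame

section Indices

lemma countable_setOf_list {ι : Type*} {S : Set ι} (hS : S.Countable) :
    {l : List ι | ∀ v ∈ l, v ∈ S}.Countable := by
  have := hS.to_subtype
  rw [← Set.range_list_map_coe]
  exact Set.countable_range _

lemma exists_strictMono_eventually_lt {ι : Type*} [Nonempty ι] {L : Set ι} (hL : L.Countable)
    (h : ℕ → ι → ℕ) :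
    ∃ α : ℕ → ℕ, StrictMono α ∧ ∀ s ∈ L, ∀ᶠ m in atTop, h (α m) s < α (m + 1) := by
  obtain ⟨f, hf⟩ := Set.countable_iff_exists_subset_range.1 hL
  let α (m : ℕ) : ℕ :=
    m.rec 0 fun m N => max N ((Finset.range (m + 1)).sup fun i => h N (f i)) + 1
  refine ⟨α, strictMono_nat_of_lt_succ fun m => Nat.lt_succ_of_le (le_max_left _ _), ?_⟩
  intro s hs
  obtain ⟨i, rfl⟩ := hf hs
  filter_upwards [eventually_ge_atTop i] with m him
  have h_le : h (α m) (f i) ≤ (Finset.range (m + 1)).sup fun i => h (α m) (f i) :=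
    Finset.le_sup (f := fun i => h (α m) (f i)) (Finset.mem_range.2 (Nat.lt_succ_of_le him))
  exact Nat.lt_succ_of_le (h_le.trans (le_max_right _ _))

lemma exists_strictMono_eventually_forall_lt {ι : Type*} [Nonempty ι] {L : Set ι}
    (hL : L.Countable) (κ : ℕ → ℕ) (n : ℕ → Finset ℕ → ι → ℕ) :
    ∃ α : ℕ → ℕ, StrictMono α ∧ ∀ s ∈ L, ∀ᶠ m in atTop, ∀ k ≤ κ (α m),
      ∀ D ⊆ Finset.range (α m), 2 * α m + n k D s < α (m + 1) := by
  obtain ⟨α, hα, h_lt⟩ := exists_strictMono_eventually_lt hL fun N s =>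
    2 * N + (Finset.range (κ N + 1) ×ˢ (Finset.range N).powerset).sup fun q => n q.1 q.2 s
  refine ⟨α, hα, fun s hs => (h_lt s hs).mono fun m hm k hk D hD => lt_of_le_of_lt ?_ hm⟩
  gcongr
  exact Finset.le_sup (f := fun q : ℕ × Finset ℕ => n q.1 q.2 s) (b := (k, D))
    (Finset.mk_mem_product (Finset.mem_range.2 (Nat.lt_succ_of_le hk)) (Finset.mem_powerset.2 hD))

lemma intervalSeq_Ico {α : ℕ → ℕ} (hα : StrictMono α) :
    IntervalSeq fun m => Finset.Ico (α m) (α (m + 1)) := by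
  constructor
  · intro m
    have h_lt : α m < α (m + 1) := hα m.lt_succ_self
    exact ⟨α m, α (m + 1) - 1, by omega, by ext; simp only [Finset.mem_Ico, Finset.mem_Icc]; omega⟩
  · intro m i hi j hj
    exact (Finset.mem_Ico.1 hi).2.trans_le (Finset.mem_Ico.1 hj).1

lemma exists_finset_image_subset {D : Finset ℕ} {J : Set ℕ} {τ : ℕ → ℕ} {N : ℕ}
    (hD : D ⊆ Finset.range N) (hτ : ∀ j < N, τ j < N) :
    ∃ D' : Finset ℕ, D ⊆ D' ∧ D' ⊆ Finset.range N ∧ (∀ j ∈ J, j < N → τ j ∈ D') ∧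
      ∀ i ∈ D', i ∉ D → ∃ j ∈ J, τ j = i := by
  classical
  refine ⟨{i ∈ Finset.range N | i ∈ D ∨ ∃ j ∈ J, τ j = i}, fun i hi => ?_,
    Finset.filter_subset _ _, fun j hj hjN => ?_, fun i hi hiD => ?_⟩
  · exact Finset.mem_filter.2 ⟨hD hi, .inl hi⟩
  · exact Finset.mem_filter.2 ⟨Finset.mem_range.2 (hτ j hjN), .inr ⟨j, hj, rfl⟩⟩
  · exact (Finset.mem_filter.1 hi).2.resolve_left hiD

end Indices

section Tightness

variable {V : Type} [NormedAddCommGroup V] [NormedSpace ℝ V] {ctx : Frame V} {x y : ℕ → V}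
  {β : Ordinal.{0}} {J : Set ℕ}

-- `T` maps `𝒯` to runs of the game that player I loses; such a run can be continued because every
-- index `τ j` not yet used by player II exceeds the current integer move of player I.
lemma Frame.IsIntegerStrategy.treeRank_le {S 𝒯 : Set (List V)} {n : Finset ℕ → List V → ℕ}
    (hn : ctx.IsIntegerStrategy x S n)
    (h_win : ctx.IWinsF (ctx.fspan (Set.range x)) S β (ctx.fspan ∅) [])
    {T : V →ₗ[ℝ] V} {τ : ℕ → ℕ} (hTτ : ∀ j ∈ J, T (x j) = x (τ j))
    (hτ : ∀ᶠ N in atTop, ∀ j < N, τ j < N)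
    (h_prefix : ∀ {s t}, s <+: t → t ∈ 𝒯 → s ∈ 𝒯)
    (h_mem : ∀ s ∈ 𝒯, ∀ v ∈ s, v ∈ ctx.fspan (x '' J) ∧ T v ≠ 0)
    (h_avoid : ∀ s ∈ 𝒯, s.map T ∉ S)
    (h_start : ∀ j ∈ J, n ∅ [] < τ j)
    (h_gap : ∀ s ∈ 𝒯, ∃ᶠ N in atTop, ∀ D ⊆ Finset.range N, ∀ j ∈ J, N ≤ j →
      n D (s.map T) < τ j) :
    treeRank 𝒯 ≤ (β : WithTop Ordinal) := by
  refine treeRank_le_of_descent h_prefix (fun ξ s => ∃ D : Finset ℕ,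
    ctx.IWinsF (ctx.fspan (Set.range x)) S ξ (ctx.fspan (x '' D)) (s.map T) ∧
      ∀ j ∈ J, τ j ∉ D → n D (s.map T) < τ j) ?_ ⟨∅, by simpa using h_win, by simpa using h_start⟩
  rintro ξ s - ⟨D, h_winD, hD⟩
  obtain ⟨ξ', hξ', h_next⟩ := hn ξ D (s.map T) h_winD
  refine ⟨ξ', hξ', fun v hsv => ?_⟩
  obtain ⟨hv, hTv⟩ := h_mem _ hsv v (by simp)
  have h_subset : ∀ᶠ N in atTop, D ⊆ Finset.range N :=
    (Finset.eventually_all D).2 fun i _ => (eventually_gt_atTop i).mono fun _ => Finset.mem_range.2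
  obtain ⟨N, h_gapN, hDN, hvN, hτN⟩ := ((h_gap _ hsv).and_eventually
    (h_subset.and ((ctx.eventually_mem_fspan_image hv).and hτ))).exists
  obtain ⟨D', hDD', hD'N, hτD', h_new⟩ := exists_finset_image_subset (J := J) hDN hτN
  have hTvD' : T v ∈ ctx.fspan (x '' D') := by
    refine ctx.fspan_mono ?_ (ctx.map_mem_fspan T hvN)
    rintro _ ⟨_, ⟨j, ⟨hj, hjN⟩, rfl⟩, rfl⟩
    exact ⟨τ j, hτD' j hj hjN, (hTτ j hj).symm⟩
  have h_legal : ∀ i ∈ D', i ∉ D → n D (s.map T) < i := by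
    intro i hi hiD
    obtain ⟨j, hj, rfl⟩ := h_new i hi hiD
    exact hD j hj hiD
  have h_map : s.map T ++ [T v] = (s ++ [v]).map T := by simp
  refine ⟨D', ?_, fun j hj hjD' => h_gapN D' hD'N j hj ?_⟩
  · rw [← h_map]
    exact h_next D' hDD' h_legal _ hTvD' hTv (h_map ▸ h_avoid _ hsv)
  · by_contra! hjN
    exact hjD' (hτD' j hj hjN)

lemma treeRank_embTree_le {K M : ℝ} {f : ℕ → StrongDual ℝ V} {k d p : ℕ}
    {n : Finset ℕ → List V → ℕ} (hxn : ∀ i, ‖x i‖ = 1) (hf : IsBiorthogonal f x)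
    (hfM : ∀ i, ‖f i‖ ≤ M) (hy : ∀ i, y i ≠ 0) (hK : 0 < K) (hk : (1 + 4 * d * M) * K ≤ k)
    (hn : ctx.IsIntegerStrategy x {l | ¬OutcomeEquiv k l y} n)
    (h_strat : ctx.IStratF (ctx.fspan (Set.range x)) β {l | ¬OutcomeEquiv k l y})
    (hdp : d ≤ p) (hJ : ∀ j ∈ J, j < d ∨ p + d ≤ j) (h_start : n ∅ [] < p)
    (h_gap : ∀ s : List V, (∀ v ∈ s, v ∈ ctx.fspan (Set.range x)) → ∃ᶠ N in atTop,
      ∀ D ⊆ Finset.range N, ∀ j ∈ J, N ≤ j → n D s < j) :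
    treeRank (embTree y (ctx.fspan (x '' J)) K) ≤ (β : WithTop Ordinal) := by
  let T : V →ₗ[ℝ] V := swapOp f x d p
  let τ (j : ℕ) : ℕ := if j < d then p + j else j
  have hM : 0 ≤ M := (norm_nonneg (f 0)).trans (hfM 0)
  have hc : 0 < 1 + 4 * d * M := by positivity
  have hTT (v : V) : T (T v) = v := hf.swapOp_swapOp hdp v
  have hT (v : V) : ‖T v‖ ≤ (1 + 4 * d * M) * ‖v‖ := norm_swapOp_apply_le hfM hxn v
  have hT' (v : V) : ‖v‖ ≤ (1 + 4 * d * M) * ‖T v‖ := by simpa only [hTT] using hT (T v)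
  have hTτ : ∀ j ∈ J, T (x j) = x (τ j) := by
    intro j hj
    obtain hjd | hpj := hJ j hj
    · exact (hf.swapOp_apply_of_lt hdp hjd).trans (by simp only [τ, if_pos hjd])
    · exact (hf.swapOp_apply_of_le hpj).trans (by simp only [τ, if_neg (by omega : ¬j < d)])
  have h_le_τ (j : ℕ) : j ≤ τ j := by grind
  have hT_range {v : V} (hv : v ∈ ctx.fspan (x '' J)) : T v ∈ ctx.fspan (Set.range x) := by
    refine ctx.fspan_mono ?_ (ctx.map_mem_fspan T hv)
    rintro _ ⟨_, ⟨j, hj, rfl⟩, rfl⟩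
    exact ⟨τ j, (hTτ j hj).symm⟩
  refine hn.treeRank_le (h_strat.iWinsF fun h_nil => h_nil (outcomeEquiv_nil _ _)) hTτ ?_
    embTree_of_prefix ?_ ?_ ?_ ?_
  · filter_upwards [eventually_ge_atTop (p + d)] with N hN j hj
    grind
  · intro s hs v hv
    refine ⟨hs.1 v hv, fun hTv => OutcomeEquiv.ne_zero hy hs.2 hv ?_⟩
    rw [← hTT v, hTv, map_zero]
  · exact fun s hs h_not => h_not ((OutcomeEquiv.map hK hc hT hT' hs.2).mono (by positivity) hk)
  · intro j hj
    grind
  · intro s hs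
    have h_mem : ∀ v ∈ s.map T, v ∈ ctx.fspan (Set.range x) := by
      simpa only [List.forall_mem_map] using fun v hv => hT_range (hs.1 v hv)
    exact (h_gap _ h_mem).mono fun N hN D hD j hj hNj => (hN D hD j hj hNj).trans_le (h_le_τ j)

lemma embIndex_le_of_growth {M : ℝ} {f : ℕ → StrongDual ℝ V} {α κ : ℕ → ℕ}
    {n : ℕ → Finset ℕ → List V → ℕ} (hxn : ∀ i, ‖x i‖ = 1) (hf : IsBiorthogonal f x)
    (hfM : ∀ i, ‖f i‖ ≤ M) (hy : ∀ i, y i ≠ 0)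
    (hn : ∀ k : ℕ, ctx.IsIntegerStrategy x {l | ¬OutcomeEquiv k l y} (n k))
    (h_strat : ∀ K : ℝ, 1 ≤ K →
      ctx.IStratF (ctx.fspan (Set.range x)) β {l | ¬OutcomeEquiv K l y})
    (hκ : Monotone κ) (hκM : ∀ N : ℕ, (1 + 4 * N * M) * N ≤ κ N) (hα : StrictMono α)
    (h_growth : ∀ s ∈ {s : List V | ∀ v ∈ s, v ∈ ctx.fspan (Set.range x)},
      ∀ᶠ m in atTop, ∀ k ≤ κ (α m), ∀ D ⊆ Finset.range (α m), 2 * α m + n k D s < α (m + 1))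
    {A : Set ℕ} (hA : A.Infinite)
    (hJ : ∀ j ∈ J, ∀ m ∈ A, α m ≤ j → α (m + 1) ≤ j) :
    embIndex y (ctx.fspan (x '' J)) ≤ (β : WithTop Ordinal) := by
  refine embIndex_le fun K hK => ?_
  have hA_frequently := Nat.frequently_atTop_iff_infinite.2 hA
  have hKα : ∀ᶠ m in atTop, K ≤ α m :=
    (tendsto_natCast_atTop_atTop.comp hα.tendsto_atTop).eventually_ge_atTop K
  obtain ⟨a, haA, haK, ha⟩ :=
    (hA_frequently.and_eventually (hKα.and (h_growth [] (by simp)))).exists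
  have h_start := ha (κ (α a)) le_rfl ∅ (Finset.empty_subset _)
  have hM : 0 ≤ M := (norm_nonneg (f 0)).trans (hfM 0)
  have hk : (1 + 4 * α a * M) * K ≤ κ (α a) := le_trans (by gcongr) (hκM (α a))
  have hk_one : (1 : ℝ) ≤ κ (α a) := by
    refine le_trans (one_le_mul_of_one_le_of_one_le ?_ hK) hk
    exact le_add_of_nonneg_right (by positivity)
  refine treeRank_embTree_le (d := α a) (p := α (a + 1) - α a) hxn hf hfM hy (by linarith) hk
    (hn _) (h_strat _ hk_one) (by omega) (fun j hj => ?_) (by omega) fun s hs => ?_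
  · have hj_gap := hJ j hj a haA
    omega
  · refine hα.tendsto_atTop.frequently ((hA_frequently.and_eventually
      ((eventually_ge_atTop a).and (h_growth s hs))).mono ?_)
    rintro m ⟨hmA, ham, hm⟩ D hD j hj hmj
    have hn_lt := hm (κ (α a)) (hκ (hα.monotone ham)) D hD
    have hj_gap := hJ j hj m hmA hmj
    omega

theorem tightness_intervals_general (hx : ctx.IsBlockSeq x) (hxn : ∀ n, ‖x n‖ = 1)
    (hy : ∀ n, y n ≠ 0)
    (h : ∀ K : ℝ, 1 ≤ K →
      ctx.IStratF (ctx.fspan (Set.range x)) β {l | ¬OutcomeEquiv K l y}) :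
    ∃ I : ℕ → Finset ℕ, IntervalSeq I ∧
      ∀ A : Set ℕ, A.Infinite →
        embIndex y (ctx.fspan {v | ∃ j : ℕ, (∀ m ∈ A, j ∉ I m) ∧ v = x j})
          ≤ (β : WithTop Ordinal) := by
  obtain ⟨M, f, hfM, hf⟩ := hx.exists_isBiorthogonal hxn
  have hM : 0 ≤ M := (norm_nonneg (f 0)).trans (hfM 0)
  choose n hn using fun k : ℕ => hx.exists_isIntegerStrategy {l | ¬OutcomeEquiv k l y}
  let κ (N : ℕ) : ℕ := ⌈(1 + 4 * N * M) * N⌉₊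
  have hκ : Monotone κ := fun N N' hN => by dsimp only [κ]; gcongr
  obtain ⟨α, hα, h_growth⟩ := exists_strictMono_eventually_forall_lt
    (countable_setOf_list (ctx.countable_fspan (Set.countable_range x))) κ n
  refine ⟨fun m => Finset.Ico (α m) (α (m + 1)), intervalSeq_Ico hα, fun A hA => ?_⟩
  have h_image : {v | ∃ j : ℕ, (∀ m ∈ A, j ∉ Finset.Ico (α m) (α (m + 1))) ∧ v = x j} =
      x '' {j | ∀ m ∈ A, j ∉ Finset.Ico (α m) (α (m + 1))} := by
    simp only [Set.image, eq_comm, Set.mem_ofPred_eq]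
  rw [h_image]
  refine embIndex_le_of_growth hxn hf hfM hy hn h hκ (fun N => Nat.le_ceil _) hα h_growth hA ?_
  intro j hj m hm hmj
  simpa [hmj] using hj m hm

end Tightness

/-- Suppose `(x n)` is a normalised block sequence such that, for every
normalised block sequence `(y n)` in `X = [x n]` and every `K ≥ 1`, I has a strategy in
`F^β_X` to play outcomes not `K`-equivalent to `(y n)`.  Then for every normalised block
sequence `(y n)` in `X` there are successive finite intervals `I 0 < I 1 < …` of `ℕ` such
that for every infinite `A ⊆ ℕ`, `Emb((y n), [x j : j ∉ ⋃_{m ∈ A} I m]) ≤ β`. -/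
theorem tightness_intervals
    (𝒲 : Type) [NormedAddCommGroup 𝒲] [NormedSpace ℝ 𝒲] (ctx : Frame 𝒲)
    (x : ℕ → 𝒲) (hx : ctx.IsBlockSeq x) (hxn : ∀ n, ‖x n‖ = 1)
    (β : Ordinal) (hβ : β < (Cardinal.aleph 1).ord)
    (h : ∀ y : ℕ → 𝒲, ctx.BlockSeqRel x y → (∀ n, ‖y n‖ = 1) → ∀ K : ℝ, 1 ≤ K →
      ctx.IStratF (ctx.fspan (Set.range x)) β {l | ¬OutcomeEquiv K l y}) :
    ∀ y : ℕ → 𝒲, ctx.BlockSeqRel x y → (∀ n, ‖y n‖ = 1) →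
      ∃ I : ℕ → Finset ℕ, IntervalSeq I ∧
        ∀ A : Set ℕ, A.Infinite →
          embIndex y (ctx.fspan {v | ∃ j : ℕ, (∀ m ∈ A, j ∉ I m) ∧ v = x j})
            ≤ (β : WithTop Ordinal) :=
  fun y hy hyn => tightness_intervals_general hx hxn hy.2.1 (h y hy hyn)

end Rosendal
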